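/- Let ≺ be a linear order on the natural numbers. Let i_1, …, i_k and j_1, …, j_k be tuples of pairwise distinct natural numbers with i_1 ≺ i_2 ≺ ⋯ ≺ i_k and j_1 ≺ j_2 ≺ ⋯ ≺ j_k, such that E i_n i_m ↔ E j_n j_m for all 1 ≤ n, m ≤ k. Let B and B' be the Boolean subalgebras of Set I generated by {u i_1, …, u i_k} and {u j_1, …, u j_k} respectively. Order the atoms of B as follows: first the atoms {(min(i_n,i_m), max(i_n,i_m))} = u i_n ∩ u i_m (for position pairs n < m with E i_n i_m), ordered among themselves by the lexicographic order on the position pairs (n,m); above all of these, the atoms u i_n \ (⋃ of u i_ℓ over ℓ ≠ n), ordered by the position n; and greatest of all, the atom I \ (u i_1 ∪ ⋯ ∪ u i_k). Let ⊑ be the natural order on B induced by this linear order on the atoms of B, and let ⊑' be the order on B' defined analogously from the tuple j_1, …, j_k. Then there is an isomorphism of Boolean algebras g : B → B' with g (u i_ℓ) = u j_ℓ for all ℓ, and g is additionally an order isomorphism: for all x, y ∈ B, x ⊑ y if and only if g x ⊑' g y. -/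

import Mathlib

/-- The index set `I = {(n,m) : ℕ × ℕ | n ≤ m}`. -/
def I : Set (ℕ × ℕ) := {p | p.1 ≤ p.2}

/-- The element `u n = {(n,m) | n ≤ m} ∪ {(m,n) | m < n ∧ E m n}` of the Boolean algebra `Set I`. -/
def u (E : ℕ → ℕ → Prop) (n : ℕ) : Set I :=
  {p : I | (p.val.1 = n ∧ n ≤ p.val.2) ∨ (p.val.2 = n ∧ p.val.1 < n ∧ E p.val.1 n)}

/-- A Boolean subalgebra of a Boolean algebra, i.e. a subset containing `⊥` and `⊤` and
closed under `⊓`, `⊔`, and complement. -/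
def IsBoolSubalg {L : Type*} [BooleanAlgebra L] (B : Set L) : Prop :=
  ⊥ ∈ B ∧ ⊤ ∈ B ∧ (∀ x ∈ B, ∀ y ∈ B, x ⊓ y ∈ B) ∧ (∀ x ∈ B, ∀ y ∈ B, x ⊔ y ∈ B) ∧
    ∀ x ∈ B, xᶜ ∈ B

/-- The Boolean subalgebra generated by a set: the smallest Boolean subalgebra containing it. -/
def boolGen {L : Type*} [BooleanAlgebra L] (S : Set L) : Set L :=
  ⋂₀ {B | IsBoolSubalg B ∧ S ⊆ B}

/-- `a` is an atom of the Boolean subalgebra `B`. -/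
def IsAtomOfSet {L : Type*} [BooleanAlgebra L] (B : Set L) (a : L) : Prop :=
  a ∈ B ∧ a ≠ ⊥ ∧ ∀ b ∈ B, b ≤ a → b = ⊥ ∨ b = a

/-- The natural order on a (finite) Boolean subalgebra `B` induced by a linear order `r'` on the
set of atoms of `B`: `x ⊑ y` iff `x = y` or the `r'`-greatest atom of `B` lying below exactly
one of `x` and `y` lies below `y` (colexicographic order on sets of atoms). -/
def natOrderOn {A : Type*} [BooleanAlgebra A] (B : Set A) (r' : A → A → Prop) (x y : A) : Prop :=
  x = y ∨ ∃ a, IsAtomOfSet B a ∧ a ≤ y ∧ ¬ a ≤ x ∧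
    ∀ b, IsAtomOfSet B b → ¬ (b ≤ x ↔ b ≤ y) → r' b a

/-- Keys indexing the atoms of the subalgebra generated by `u (i 1), …, u (i k)`:
`Sum.inl (n, m)` stands for the atom `u (i n) ∩ u (i m) = {(i n, i m)}`,
`Sum.inr (Sum.inl n)` for the atom `u (i n) \ (⋃ ℓ ≠ n, u (i ℓ))`, and
`Sum.inr (Sum.inr _)` for the atom `I \ (u (i 1) ∪ ⋯ ∪ u (i k))`. -/
def keyAtom (E : ℕ → ℕ → Prop) {k : ℕ} (i : Fin k → ℕ) :
    (Fin k × Fin k) ⊕ (Fin k ⊕ Unit) → Set I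
  | Sum.inl p => u E (i p.1) ∩ u E (i p.2)
  | Sum.inr (Sum.inl n) => u E (i n) \ ⋃ ℓ, ⋃ (_ : ℓ ≠ n), u E (i ℓ)
  | Sum.inr (Sum.inr _) => (⋃ ℓ, u E (i ℓ))ᶜ

/-- A key is valid if it indexes an actual atom: for `Sum.inl (n, m)` this requires `n < m`
(as positions) and `E (i n) (i m)`. -/
def keyValid (E : ℕ → ℕ → Prop) {k : ℕ} (i : Fin k → ℕ) :
    (Fin k × Fin k) ⊕ (Fin k ⊕ Unit) → Prop
  | Sum.inl p => p.1 < p.2 ∧ E (i p.1) (i p.2)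
  | Sum.inr _ => True

/-- The order on the keys: first the singleton atoms, ordered lexicographically by their pair
of positions; then the atoms `u (i n) \ (⋃ ℓ ≠ n, u (i ℓ))`, ordered by the position `n`; and
greatest of all the atom `I \ (u (i 1) ∪ ⋯ ∪ u (i k))`. -/
def keyLE {k : ℕ} : (Fin k × Fin k) ⊕ (Fin k ⊕ Unit) → (Fin k × Fin k) ⊕ (Fin k ⊕ Unit) → Prop
  | Sum.inl p, Sum.inl q => p.1 < q.1 ∨ (p.1 = q.1 ∧ p.2 ≤ q.2)
  | Sum.inl _, Sum.inr _ => True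
  | Sum.inr _, Sum.inl _ => False
  | Sum.inr (Sum.inl n), Sum.inr (Sum.inl n') => n ≤ n'
  | Sum.inr (Sum.inl _), Sum.inr (Sum.inr _) => True
  | Sum.inr (Sum.inr _), Sum.inr (Sum.inl _) => False
  | Sum.inr (Sum.inr _), Sum.inr (Sum.inr _) => True

/-- The induced linear order on the atoms of the subalgebra generated by
`u (i 1), …, u (i k)`, transported from the order on the valid keys. -/
def atomRel (E : ℕ → ℕ → Prop) {k : ℕ} (i : Fin k → ℕ) : Set I → Set I → Prop := fun a b =>
  ∃ p q, keyValid E i p ∧ keyValid E i q ∧ keyAtom E i p = a ∧ keyAtom E i q = b ∧ keyLE p q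

theorem mem_u_aux (E : ℕ → ℕ → Prop) (n : ℕ) (q : I) :
    q ∈ u E n ↔ q.val.1 = n ∨ (q.val.2 = n ∧ q.val.1 < n ∧ E q.val.1 n) := by
  have h : q.val.1 ≤ q.val.2 := q.2
  unfold u
  constructor
  · rintro (⟨h1, _⟩ | h1)
    · exact Or.inl h1
    · exact Or.inr h1
  · rintro (h1 | h1)
    · exact Or.inl ⟨h1, h1 ▸ h⟩
    · exact Or.inr h1

/-- Every type realised over `j` is realised over `i`. -/
theorem exists_type (E : ℕ → ℕ → Prop)
    (hsym : ∀ a b, E a b → E b a) (hirr : ∀ a, ¬ E a a)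
    (k : ℕ) (i j : Fin k → ℕ)
    (hi : Function.Injective i) (hj : Function.Injective j)
    (hE : ∀ n m : Fin k, E (i n) (i m) ↔ E (j n) (j m)) (q : I) :
    ∃ p : I, ∀ l, p ∈ u E (i l) ↔ q ∈ u E (j l) := by
  obtain ⟨N, hN⟩ : ∃ N, ∀ l, i l < N := by
    refine ⟨(∑ l, i l) + 1, fun l => Nat.lt_succ_of_le ?_⟩
    exact Finset.single_le_sum (f := i) (fun _ _ => Nat.zero_le _) (Finset.mem_univ l)
  by_cases h2 : ∃ n m, n ≠ m ∧ q ∈ u E (j n) ∧ q ∈ u E (j m)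
  · obtain ⟨n, m, hnm, hn, hm⟩ := h2
    wlog hlt : q.val.1 = j n ∧ q.val.2 = j m ∧ E (j n) (j m) generalizing n m
    · refine this m n hnm.symm hm hn ?_
      rw [mem_u_aux] at hn hm
      have := hj.ne hnm
      grind
    obtain ⟨h1, h2, h3⟩ := hlt
    have hij : i n ≠ i m := hi.ne hnm
    have hjj : j n ≠ j m := hj.ne hnm
    have key : ∀ l, q ∈ u E (j l) ↔ l = n ∨ l = m := by
      intro l
      constructor
      · intro hl
        rw [mem_u_aux, h1, h2] at hl
        rcases hl with hl | hl
        · exact Or.inl (hj hl.symm)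
        · exact Or.inr (hj hl.1.symm)
      · rintro (rfl | rfl) <;> assumption
    have h4 := (hE n m).2 h3
    have h5 := hsym _ _ h4
    rcases lt_or_gt_of_ne hij with h | h
    · refine ⟨⟨(i n, i m), h.le⟩, fun l => ?_⟩
      rw [key, mem_u_aux]
      have := @hi l n
      have := @hi l m
      grind
    · refine ⟨⟨(i m, i n), h.le⟩, fun l => ?_⟩
      rw [key, mem_u_aux]
      have := @hi l n
      have := @hi l m
      grind
  by_cases h1 : ∃ n, q ∈ u E (j n)
  · obtain ⟨n, hn⟩ := h1
    refine ⟨⟨(i n, N), (hN n).le⟩, fun l => ?_⟩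
    have key : q ∈ u E (j l) ↔ l = n := by
      constructor
      · intro hl
        by_contra hne
        exact h2 ⟨l, n, hne, hl, hn⟩
      · rintro rfl
        exact hn
    rw [key, mem_u_aux]
    have := hN l
    have := @hi l n
    grind
  · refine ⟨⟨(N, N), le_refl N⟩, fun l => ?_⟩
    have hl : ¬ q ∈ u E (j l) := fun h => h1 ⟨l, h⟩
    rw [mem_u_aux]
    have := hN l
    grind

theorem isBoolSubalg_boolGen {L : Type*} [BooleanAlgebra L] (S : Set L) :
    IsBoolSubalg (boolGen S) := by
  refine ⟨fun B h => h.1.1, fun B h => h.1.2.1, fun x hx y hy B h => ?_,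
    fun x hx y hy B h => ?_, fun x hx B h => ?_⟩
  · exact h.1.2.2.1 x (hx B h) y (hy B h)
  · exact h.1.2.2.2.1 x (hx B h) y (hy B h)
  · exact h.1.2.2.2.2 x (hx B h)

theorem subset_boolGen {L : Type*} [BooleanAlgebra L] (S : Set L) : S ⊆ boolGen S :=
  fun _ hx _ h => h.2 hx

theorem boolGen_min {L : Type*} [BooleanAlgebra L] {S B : Set L} (hB : IsBoolSubalg B)
    (h : S ⊆ B) : boolGen S ⊆ B := fun _ hx => hx B ⟨hB, h⟩

theorem saturated_of_mem (E : ℕ → ℕ → Prop) {k : ℕ} (i : Fin k → ℕ) {x : Set I}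
    (hx : x ∈ boolGen (Set.range fun l => u E (i l))) (p q : I)
    (h : ∀ l, p ∈ u E (i l) ↔ q ∈ u E (i l)) : p ∈ x ↔ q ∈ x := by
  have := boolGen_min (S := Set.range fun l => u E (i l))
    (B := {x : Set I | p ∈ x ↔ q ∈ x}) ?_ ?_ hx
  · exact this
  · refine ⟨by simp, by simp, ?_, ?_, ?_⟩
    · intro x hx y hy
      exact and_congr hx hy
    · intro x hx y hy
      exact or_congr hx hy
    · intro x hx
      exact not_congr hx
  · rintro _ ⟨l, rfl⟩
    exact h l

theorem preimage_u (E : ℕ → ℕ → Prop) {k : ℕ} (i j : Fin k → ℕ) (f : I → I)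
    (hf : ∀ q l, f q ∈ u E (i l) ↔ q ∈ u E (j l)) (l : Fin k) :
    f ⁻¹' (u E (i l)) = u E (j l) := Set.ext fun q => hf q l

theorem preimage_mem (E : ℕ → ℕ → Prop) {k : ℕ} (i j : Fin k → ℕ) (f : I → I)
    (hf : ∀ q l, f q ∈ u E (i l) ↔ q ∈ u E (j l)) {x : Set I}
    (hx : x ∈ boolGen (Set.range fun l => u E (i l))) :
    f ⁻¹' x ∈ boolGen (Set.range fun l => u E (j l)) := by
  obtain ⟨a1, a2, a3, a4, a5⟩ := isBoolSubalg_boolGen (Set.range fun l => u E (j l))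
  refine boolGen_min (S := Set.range fun l => u E (i l))
    (B := {x : Set I | f ⁻¹' x ∈ boolGen (Set.range fun l => u E (j l))}) ?_ ?_ hx
  · exact ⟨a1, a2, fun x hx y hy => a3 _ hx _ hy, fun x hx y hy => a4 _ hx _ hy,
      fun x hx => a5 _ hx⟩
  · rintro _ ⟨l, rfl⟩
    refine subset_boolGen _ ⟨l, ?_⟩
    exact (preimage_u E i j f hf l).symm

theorem preimage_preimage_eq (E : ℕ → ℕ → Prop) {k : ℕ} (i j : Fin k → ℕ) (f f' : I → I)
    (hf : ∀ q l, f q ∈ u E (i l) ↔ q ∈ u E (j l))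
    (hf' : ∀ q l, f' q ∈ u E (j l) ↔ q ∈ u E (i l)) {x : Set I}
    (hx : x ∈ boolGen (Set.range fun l => u E (i l))) :
    f' ⁻¹' (f ⁻¹' x) = x := by
  ext p
  exact saturated_of_mem E i hx _ _ fun l => (hf _ l).trans (hf' _ l)

theorem preimage_keyAtom (E : ℕ → ℕ → Prop) {k : ℕ} (i j : Fin k → ℕ) (f : I → I)
    (hf : ∀ q l, f q ∈ u E (i l) ↔ q ∈ u E (j l)) (c) :
    f ⁻¹' (keyAtom E i c) = keyAtom E j c := by
  rcases c with c | c | c <;> ext q <;> simp [keyAtom, hf]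

theorem atomRel_preimage (E : ℕ → ℕ → Prop) {k : ℕ} (i j : Fin k → ℕ) (f : I → I)
    (hf : ∀ q l, f q ∈ u E (i l) ↔ q ∈ u E (j l))
    (hE : ∀ n m : Fin k, E (i n) (i m) ↔ E (j n) (j m)) {a b : Set I}
    (h : atomRel E i a b) : atomRel E j (f ⁻¹' a) (f ⁻¹' b) := by
  have hv : ∀ c, keyValid E i c → keyValid E j c := by
    rintro (c | c) hc
    · exact ⟨hc.1, (hE _ _).1 hc.2⟩
    · trivial
  obtain ⟨p, q, hp, hq, rfl, rfl, hle⟩ := h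
  exact ⟨p, q, hv p hp, hv q hq, (preimage_keyAtom E i j f hf p).symm,
    (preimage_keyAtom E i j f hf q).symm, hle⟩

theorem atom_preimage (E : ℕ → ℕ → Prop) {k : ℕ} (i j : Fin k → ℕ) (f f' : I → I)
    (hf : ∀ q l, f q ∈ u E (i l) ↔ q ∈ u E (j l))
    (hf' : ∀ q l, f' q ∈ u E (j l) ↔ q ∈ u E (i l)) {a : Set I}
    (ha : IsAtomOfSet (boolGen (Set.range fun l => u E (i l))) a) :
    IsAtomOfSet (boolGen (Set.range fun l => u E (j l))) (f ⁻¹' a) := by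
  obtain ⟨h1, h2, h3⟩ := ha
  refine ⟨preimage_mem E i j f hf h1, ?_, ?_⟩
  · intro h
    apply h2
    rw [← preimage_preimage_eq E i j f f' hf hf' h1, h]
    rfl
  · intro b hb hba
    have hle : f' ⁻¹' b ≤ a := by
      rw [← preimage_preimage_eq E i j f f' hf hf' h1]
      exact Set.preimage_mono hba
    have hbb := preimage_preimage_eq E j i f' f hf' hf hb
    rcases h3 _ (preimage_mem E j i f' hf' hb) hle with h | h
    · left
      rw [← hbb, h]
      rfl
    · right
      rw [← hbb, h]

theorem natOrder_preimage (E : ℕ → ℕ → Prop) {k : ℕ} (i j : Fin k → ℕ) (f f' : I → I)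
    (hf : ∀ q l, f q ∈ u E (i l) ↔ q ∈ u E (j l))
    (hf' : ∀ q l, f' q ∈ u E (j l) ↔ q ∈ u E (i l))
    (hE : ∀ n m : Fin k, E (i n) (i m) ↔ E (j n) (j m)) {x y : Set I}
    (hx : x ∈ boolGen (Set.range fun l => u E (i l)))
    (hy : y ∈ boolGen (Set.range fun l => u E (i l)))
    (h : natOrderOn (boolGen (Set.range fun l => u E (i l))) (atomRel E i) x y) :
    natOrderOn (boolGen (Set.range fun l => u E (j l))) (atomRel E j) (f ⁻¹' x) (f ⁻¹' y) := by
  have le_iff : ∀ b ∈ boolGen (Set.range fun l => u E (i l)),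
      ∀ z ∈ boolGen (Set.range fun l => u E (i l)), f ⁻¹' b ≤ f ⁻¹' z ↔ b ≤ z := by
    intro b hb z hz
    constructor
    · intro h
      rw [← preimage_preimage_eq E i j f f' hf hf' hb, ← preimage_preimage_eq E i j f f' hf hf' hz]
      exact Set.preimage_mono h
    · intro h
      exact Set.preimage_mono h
  rcases h with rfl | ⟨a, ha, hay, hax, hmax⟩
  · exact Or.inl rfl
  · refine Or.inr ⟨f ⁻¹' a, atom_preimage E i j f f' hf hf' ha, (le_iff _ ha.1 _ hy).2 hay,
      fun h => hax ((le_iff _ ha.1 _ hx).1 h), fun b hb hne => ?_⟩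
    have hb' := atom_preimage E j i f' f hf' hf hb
    have hbb := preimage_preimage_eq E j i f' f hf' hf hb.1
    rw [← hbb] at hne ⊢
    rw [le_iff _ hb'.1 _ hx, le_iff _ hb'.1 _ hy] at hne
    exact atomRel_preimage E i j f hf hE (hmax _ hb' hne)

/-- Let `≺` be a linear order on `ℕ`, and let `(i 1, …, i k)` and `(j 1, …, j k)` be tuples of
pairwise distinct natural numbers, both increasing with respect to `≺`, inducing the same graph
`E` on positions. Then there is an isomorphism `g` of Boolean algebras from the Boolean
subalgebra `B` of `Set I` generated by `{u (i 1), …, u (i k)}` onto the subalgebra `B'`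
generated by `{u (j 1), …, u (j k)}` with `g (u (i ℓ)) = u (j ℓ)` for all `ℓ`, which is
moreover an order isomorphism for the natural orders on `B` and `B'` induced by the described
orders on their atoms. -/
theorem ordered_subalgebra_isomorphism (E : ℕ → ℕ → Prop)
    (hsym : ∀ a b, E a b → E b a) (hirr : ∀ a, ¬ E a a)
    (prec : ℕ → ℕ → Prop) (hprec : IsLinearOrder ℕ prec)
    (k : ℕ) (i j : Fin k → ℕ)
    (hi : Function.Injective i) (hj : Function.Injective j)
    (hichain : ∀ n m : Fin k, n < m → prec (i n) (i m))
    (hjchain : ∀ n m : Fin k, n < m → prec (j n) (j m))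
    (hE : ∀ n m : Fin k, E (i n) (i m) ↔ E (j n) (j m)) :
    ∃ g : Set I → Set I,
      Set.BijOn g (boolGen (Set.range fun ℓ => u E (i ℓ)))
        (boolGen (Set.range fun ℓ => u E (j ℓ))) ∧
      (∀ x ∈ boolGen (Set.range fun ℓ => u E (i ℓ)),
        ∀ y ∈ boolGen (Set.range fun ℓ => u E (i ℓ)), g (x ∩ y) = g x ∩ g y) ∧
      (∀ x ∈ boolGen (Set.range fun ℓ => u E (i ℓ)),
        ∀ y ∈ boolGen (Set.range fun ℓ => u E (i ℓ)), g (x ∪ y) = g x ∪ g y) ∧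
      (∀ x ∈ boolGen (Set.range fun ℓ => u E (i ℓ)), g xᶜ = (g x)ᶜ) ∧
      g ∅ = ∅ ∧ g Set.univ = Set.univ ∧
      (∀ ℓ : Fin k, g (u E (i ℓ)) = u E (j ℓ)) ∧
      (∀ x ∈ boolGen (Set.range fun ℓ => u E (i ℓ)),
        ∀ y ∈ boolGen (Set.range fun ℓ => u E (i ℓ)),
          (natOrderOn (boolGen (Set.range fun ℓ => u E (i ℓ))) (atomRel E i) x y ↔
            natOrderOn (boolGen (Set.range fun ℓ => u E (j ℓ))) (atomRel E j) (g x) (g y))) := by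
  choose f hf using exists_type E hsym hirr k i j hi hj hE
  choose f' hf' using exists_type E hsym hirr k j i hj hi fun n m => (hE n m).symm
  refine ⟨fun x => f ⁻¹' x, ⟨fun x hx => preimage_mem E i j f hf hx, ?_, ?_⟩,
    fun _ _ _ _ => rfl, fun _ _ _ _ => rfl, fun _ _ => rfl, rfl, rfl,
    preimage_u E i j f hf, ?_⟩
  · intro x hx y hy hxy
    rw [← preimage_preimage_eq E i j f f' hf hf' hx, ← preimage_preimage_eq E i j f f' hf hf' hy]
    exact congrArg _ hxy
  · intro y hy
    exact ⟨f' ⁻¹' y, preimage_mem E j i f' hf' hy, preimage_preimage_eq E j i f' f hf' hf hy⟩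
  · intro x hx y hy
    refine ⟨natOrder_preimage E i j f f' hf hf' hE hx hy, fun h => ?_⟩
    have := natOrder_preimage E j i f' f hf' hf (fun n m => (hE n m).symm)
      (preimage_mem E i j f hf hx) (preimage_mem E i j f hf hy) h
    rwa [preimage_preimage_eq E i j f f' hf hf' hx,
      preimage_preimage_eq E i j f f' hf hf' hy] at this
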